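/- Every element y^m w of H^1 with m ≥ 0 and w a word in H^0 admits a unique representation y^m w = w0 + w1 *̄ y + w2 *̄ y^{*̄2} + ⋯ + wm *̄ y^{*̄m} with w0, w1, …, wm ∈ H^0, where y^{*̄i} denotes the i-fold n-harmonic product of y with itself; consequently (H^1, *̄) is isomorphic to the polynomial algebra (H^0, *̄)[y]. -/

import Mathlib

open scoped BigOperators

/-- The two-letter alphabet {x, y}. -/
inductive Letter : Type
  | x : Letter
  | y : Letter
deriving DecidableEq

/-- `H = ℚ⟨x,y⟩`, the noncommutative polynomial ring over ℚ in two
indeterminates, realized as the monoid algebra of the free monoid on `{x,y}`. -/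
abbrev H : Type := MonoidAlgebra ℚ (FreeMonoid Letter)

namespace H

/-- The monomial (word) of `H` corresponding to an element of the free monoid. -/
noncomputable def word (w : FreeMonoid Letter) : H := MonoidAlgebra.single w 1

/-- The generator `x`. -/
noncomputable def X : H := word (FreeMonoid.of Letter.x)

/-- The generator `y`. -/
noncomputable def Y : H := word (FreeMonoid.of Letter.y)

/-- The word `z_k = x^{k-1} y` (for `k ≥ 1`). -/
def zW (k : ℕ) : FreeMonoid Letter :=
  FreeMonoid.ofList (List.replicate (k - 1) Letter.x ++ [Letter.y])

/-- `z_k = x^{k-1} y` as an element of `H`. -/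
noncomputable def z (k : ℕ) : H := word (zW k)

/-- A list `[k₁,…,kₙ]` gives the word `z_{k₁} z_{k₂} ⋯ z_{kₙ}`. -/
def zListW (ks : List ℕ) : FreeMonoid Letter :=
  FreeMonoid.ofList (ks.flatMap fun k => List.replicate (k - 1) Letter.x ++ [Letter.y])

/-- `H¹ = ℚ + Hy` as a ℚ-submodule of `H`. -/
noncomputable def H1 : Submodule ℚ H :=
  LinearMap.range (LinearMap.mulRight ℚ Y) ⊔ Submodule.span ℚ {1}

/-- `H⁰ = ℚ + xHy` as a ℚ-submodule of `H`. -/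
noncomputable def H0 : Submodule ℚ H :=
  LinearMap.range ((LinearMap.mulRight ℚ Y).comp (LinearMap.mulLeft ℚ X)) ⊔
    Submodule.span ℚ {1}

/-- Parse a word of `H¹` into the exponent list of its `z`-decomposition:
`z_{k₁}⋯z_{kₙ} ↦ [k₁,…,kₙ]` (auxiliary accumulator version). -/
def toZAux : List Letter → ℕ → List ℕ
  | [], _ => []
  | Letter.x :: r, n => toZAux r (n + 1)
  | Letter.y :: r, n => (n + 1) :: toZAux r 0

/-- The `z`-decomposition of a word of `H¹`. -/
def toZ (w : FreeMonoid Letter) : List ℕ := toZAux (FreeMonoid.toList w) 0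

/-- The harmonic product on words of `H¹` (via `z`-decompositions):
`1 * w = w * 1 = w` and
`z_k w₁ * z_l w₂ = z_k (w₁ * z_l w₂) + z_l (z_k w₁ * w₂) + z_{k+l} (w₁ * w₂)`. -/
noncomputable def harmW : List ℕ → List ℕ → H
  | [], w => word (zListW w)
  | k :: w1, [] => word (zListW (k :: w1))
  | k :: w1, l :: w2 =>
      z k * harmW w1 (l :: w2) + z l * harmW (k :: w1) w2 + z (k + l) * harmW w1 w2
termination_by w1 w2 => w1.length + w2.length
decreasing_by all_goals simp [Nat.lt_succ_iff] <;> omega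

/-- The n-harmonic product on words of `H¹`:
`1 *̄ w = w *̄ 1 = w` and
`z_k w₁ *̄ z_l w₂ = z_k (w₁ *̄ z_l w₂) + z_l (z_k w₁ *̄ w₂) − z_{k+l} (w₁ *̄ w₂)`. -/
noncomputable def nharmW : List ℕ → List ℕ → H
  | [], w => word (zListW w)
  | k :: w1, [] => word (zListW (k :: w1))
  | k :: w1, l :: w2 =>
      z k * nharmW w1 (l :: w2) + z l * nharmW (k :: w1) w2 - z (k + l) * nharmW w1 w2
termination_by w1 w2 => w1.length + w2.length
decreasing_by all_goals simp [Nat.lt_succ_iff] <;> omega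

/-- The harmonic product `*` on `H¹`, extended ℚ-bilinearly. -/
noncomputable def harm (a b : H) : H :=
  Finsupp.sum a.coeff fun w1 c1 =>
    Finsupp.sum b.coeff fun w2 c2 => (c1 * c2) • harmW (toZ w1) (toZ w2)

/-- The n-harmonic product `*̄` on `H¹`, extended ℚ-bilinearly. -/
noncomputable def nharm (a b : H) : H :=
  Finsupp.sum a.coeff fun w1 c1 =>
    Finsupp.sum b.coeff fun w2 c2 => (c1 * c2) • nharmW (toZ w1) (toZ w2)

/-- The letter exchange `τ(x) = y`, `τ(y) = x`. -/
def τ : Letter → Letter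
  | Letter.x => Letter.y
  | Letter.y => Letter.x

/-- `δ(w) = 1` if `w` is the empty word, `0` otherwise. -/
def δ : List Letter → ℚ
  | [] => 1
  | _ :: _ => 0

/-- The shuffle product on words:
`1 ш w = w ш 1 = w` and `u₁w₁ ш u₂w₂ = u₁(w₁ ш u₂w₂) + u₂(u₁w₁ ш w₂)`. -/
noncomputable def shW : List Letter → List Letter → H
  | [], w => word (FreeMonoid.ofList w)
  | u :: w, [] => word (FreeMonoid.ofList (u :: w))
  | u1 :: w1, u2 :: w2 =>
      word (FreeMonoid.of u1) * shW w1 (u2 :: w2) +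
        word (FreeMonoid.of u2) * shW (u1 :: w1) w2
termination_by w1 w2 => w1.length + w2.length
decreasing_by all_goals simp [Nat.lt_succ_iff]

/-- The n-shuffle product on words: `1 ш̄ w = w ш̄ 1 = w` and
`u₁w₁ ш̄ u₂w₂ = u₁(w₁ ш̄ u₂w₂) + u₂(u₁w₁ ш̄ w₂) − δ(w₁)τ(u₁)u₂w₂ − δ(w₂)τ(u₂)u₁w₁`. -/
noncomputable def nshW : List Letter → List Letter → H
  | [], w => word (FreeMonoid.ofList w)
  | u :: w, [] => word (FreeMonoid.ofList (u :: w))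
  | u1 :: w1, u2 :: w2 =>
      word (FreeMonoid.of u1) * nshW w1 (u2 :: w2) +
        word (FreeMonoid.of u2) * nshW (u1 :: w1) w2 -
        δ w1 • word (FreeMonoid.ofList (τ u1 :: u2 :: w2)) -
        δ w2 • word (FreeMonoid.ofList (τ u2 :: u1 :: w1))
termination_by w1 w2 => w1.length + w2.length
decreasing_by all_goals simp [Nat.lt_succ_iff]

/-- The shuffle product `ш` on `H`, extended ℚ-bilinearly. -/
noncomputable def sh (a b : H) : H :=
  Finsupp.sum a.coeff fun w1 c1 =>
    Finsupp.sum b.coeff fun w2 c2 =>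
      (c1 * c2) • shW (FreeMonoid.toList w1) (FreeMonoid.toList w2)

/-- The n-shuffle product `ш̄` on `H`, extended ℚ-bilinearly. -/
noncomputable def nsh (a b : H) : H :=
  Finsupp.sum a.coeff fun w1 c1 =>
    Finsupp.sum b.coeff fun w2 c2 =>
      (c1 * c2) • nshW (FreeMonoid.toList w1) (FreeMonoid.toList w2)

/-- `S₁`: the ℚ-algebra endomorphism of `H` with `S₁(x) = x`, `S₁(y) = x + y`. -/
noncomputable def S1 : H →ₐ[ℚ] H :=
  MonoidAlgebra.lift ℚ H (FreeMonoid Letter)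
    (FreeMonoid.lift fun u => match u with
      | Letter.x => X
      | Letter.y => X + Y)

/-- `S₂`: the ℚ-algebra endomorphism of `H` with `S₂(x) = x`, `S₂(y) = y − x`. -/
noncomputable def S2 : H →ₐ[ℚ] H :=
  MonoidAlgebra.lift ℚ H (FreeMonoid Letter)
    (FreeMonoid.lift fun u => match u with
      | Letter.x => X
      | Letter.y => Y - X)

/-- `S` on a word: `S(1) = 1` and `S(Fy) = S₁(F)y`. -/
noncomputable def SW (w : FreeMonoid Letter) : H :=
  match (FreeMonoid.toList w).getLast? with
  | some Letter.y =>
      S1 (word (FreeMonoid.ofList (FreeMonoid.toList w).dropLast)) * Y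
  | _ => word w

/-- The ℚ-linear map `S : H¹ → H¹` with `S(1) = 1`, `S(Fy) = S₁(F)y`. -/
noncomputable def S (a : H) : H := Finsupp.sum a.coeff fun w c => c • SW w

/-- `S̃` on a word: `S̃(1) = 1` and `S̃(Fy) = S₂(F)y`. -/
noncomputable def StW (w : FreeMonoid Letter) : H :=
  match (FreeMonoid.toList w).getLast? with
  | some Letter.y =>
      S2 (word (FreeMonoid.ofList (FreeMonoid.toList w).dropLast)) * Y
  | _ => word w

/-- The ℚ-linear map `S̃ : H¹ → H¹` with `S̃(1) = 1`, `S̃(Fy) = S₂(F)y`. -/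
noncomputable def St (a : H) : H := Finsupp.sum a.coeff fun w c => c • StW w

/-- The multiple zeta value `ζ(k₁,…,kₙ)`: the sum over strictly decreasing
tuples `m₁ > m₂ > ⋯ > mₙ > 0` of `1/(m₁^{k₁}⋯mₙ^{kₙ})`. -/
noncomputable def mzeta (ks : List ℕ) : ℝ :=
  ∑' m : {f : Fin ks.length → ℕ // (∀ i, 0 < f i) ∧
      ∀ i j : Fin ks.length, i < j → f j < f i},
    ∏ i : Fin ks.length, ((m.1 i : ℝ) ^ ks.get i)⁻¹

/-- The non-strict multiple zeta value `ζ̄(k₁,…,kₙ)`: the sum over weakly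
decreasing tuples `m₁ ≥ m₂ ≥ ⋯ ≥ mₙ > 0` of `1/(m₁^{k₁}⋯mₙ^{kₙ})`. -/
noncomputable def nmzeta (ks : List ℕ) : ℝ :=
  ∑' m : {f : Fin ks.length → ℕ // (∀ i, 0 < f i) ∧
      ∀ i j : Fin ks.length, i ≤ j → f j ≤ f i},
    ∏ i : Fin ks.length, ((m.1 i : ℝ) ^ ks.get i)⁻¹

/-- The evaluation map `Z : H⁰ → ℝ`, `Z(1) = 1`,
`Z(z_{k₁}⋯z_{kₙ}) = ζ(k₁,…,kₙ)` (extended ℚ-linearly to `H`). -/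
noncomputable def Z (a : H) : ℝ := Finsupp.sum a.coeff fun w c => (c : ℝ) * mzeta (toZ w)

/-- The n-evaluation map `Z̄ : H⁰ → ℝ`, `Z̄(1) = 1`,
`Z̄(z_{k₁}⋯z_{kₙ}) = ζ̄(k₁,…,kₙ)` (extended ℚ-linearly to `H`). -/
noncomputable def Zbar (a : H) : ℝ := Finsupp.sum a.coeff fun w c => (c : ℝ) * nmzeta (toZ w)

/-- `i`-fold n-harmonic power: `a^{*̄ 0} = 1`, `a^{*̄ (i+1)} = a *̄ a^{*̄ i}`. -/
noncomputable def nharmPow : ℕ → H → H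
  | 0, _ => 1
  | i + 1, a => nharm a (nharmPow i a)

/-- `i`-fold n-shuffle power: `a^{ш̄ 0} = 1`, `a^{ш̄ (i+1)} = a ш̄ a^{ш̄ i}`. -/
noncomputable def nshPow : ℕ → H → H
  | 0, _ => 1
  | i + 1, a => nsh a (nshPow i a)

end H


namespace H

/-- Positive lists not starting with 1. -/
def Good (b : List ℕ) : Prop := (∀ k ∈ b, 1 ≤ k) ∧ b.head? ≠ some 1

/-- `word` of a `z`-list. -/
noncomputable def zl (b : List ℕ) : H := word (zListW b)

/-- Span of the words with fewer than `m` leading `y`s. -/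
noncomputable def G (m : ℕ) : Submodule ℚ H :=
  Submodule.span ℚ {v | ∃ i b, i < m ∧ Good b ∧ v = zl (List.replicate i 1 ++ b)}

lemma word_mul (a b : FreeMonoid Letter) : word a * word b = word (a * b) := by
  simp [word, MonoidAlgebra.single_mul_single]

lemma zl_nil : zl [] = 1 := rfl

lemma zl_cons (k : ℕ) (b : List ℕ) : zl (k :: b) = z k * zl b := by
  rw [zl, zl, z, word_mul]
  rfl

lemma Y_eq : Y = z 1 := rfl

lemma zl_rep (m : ℕ) (b : List ℕ) : zl (List.replicate m 1 ++ b) = Y ^ m * zl b := by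
  induction m with
  | zero => simp
  | succ m ih => rw [List.replicate_succ, List.cons_append, zl_cons, ih, pow_succ', mul_assoc, Y_eq]

lemma toZAux_rep (n : ℕ) (l : List Letter) (j : ℕ) :
    toZAux (List.replicate n Letter.x ++ l) j = toZAux l (j + n) := by
  induction n generalizing j with
  | zero => simp
  | succ n ih =>
    rw [List.replicate_succ, List.cons_append, toZAux, ih]
    congr 1; omega

lemma toZ_zListW (b : List ℕ) (hb : ∀ k ∈ b, 1 ≤ k) : toZ (zListW b) = b := by
  induction b with
  | nil => rfl
  | cons k b ih =>
    have h1 : 1 ≤ k := hb k (by simp)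
    have h2 := ih (fun j hj => hb j (by simp [hj]))
    change toZAux ((List.replicate (k - 1) Letter.x ++ [Letter.y]) ++
      (b.flatMap fun k => List.replicate (k - 1) Letter.x ++ [Letter.y])) 0 = _
    rw [List.append_assoc, toZAux_rep]
    change (0 + (k-1) + 1) :: toZ (zListW b) = _
    rw [h2]
    congr 1; omega

/-- Bilinear version of `nharm`. -/
noncomputable def B : H →ₗ[ℚ] H →ₗ[ℚ] H :=
  LinearMap.mk₂ ℚ nharm
    (by
      intro a a' b
      unfold nharm
      rw [MonoidAlgebra.coeff_add, Finsupp.sum_add_index']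
      · intro u; simp
      · intro u c c'
        simp only [add_mul, add_smul]
        exact Finsupp.sum_add)
    (by
      intro r a b
      unfold nharm
      rw [MonoidAlgebra.coeff_smul, Finsupp.sum_smul_index']
      · rw [Finsupp.smul_sum]
        simp only [Finsupp.smul_sum, smul_smul, smul_eq_mul, mul_assoc]
      · intro u; simp)
    (by
      intro a b b'
      unfold nharm
      rw [← Finsupp.sum_add]
      congr 1; ext1 u; ext1 c
      rw [MonoidAlgebra.coeff_add, Finsupp.sum_add_index']
      · intro u; simp
      · intro u c c'
        simp only [mul_add, add_smul])
    (by
      intro r a b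
      unfold nharm
      rw [Finsupp.smul_sum]
      congr 1; ext1 u; ext1 c
      rw [MonoidAlgebra.coeff_smul, Finsupp.sum_smul_index', Finsupp.smul_sum]
      · simp only [smul_smul, smul_eq_mul, mul_left_comm]
      · intro u; simp)

lemma B_apply (a b : H) : B a b = nharm a b := rfl

lemma B_zl (a b : List ℕ) (ha : ∀ k ∈ a, 1 ≤ k) (hb : ∀ k ∈ b, 1 ≤ k) :
    B (zl a) (zl b) = nharmW a b := by
  rw [B_apply, nharm, zl, zl, word, word, MonoidAlgebra.coeff_single, MonoidAlgebra.coeff_single,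
    Finsupp.sum_single_index, Finsupp.sum_single_index, toZ_zListW a ha, toZ_zListW b hb]
  · simp
  · simp
  · simp

lemma zl_mem {m i : ℕ} {b : List ℕ} (hi : i < m) (hb : Good b) :
    zl (List.replicate i 1 ++ b) ∈ G m :=
  Submodule.subset_span ⟨i, b, hi, hb, rfl⟩

lemma G_mono {m n : ℕ} (h : m ≤ n) : G m ≤ G n := by
  apply Submodule.span_mono
  rintro v ⟨i, b, hi, hb, rfl⟩
  exact ⟨i, b, by omega, hb, rfl⟩

lemma good_pos {i : ℕ} {b : List ℕ} (hb : Good b) : ∀ k ∈ List.replicate i 1 ++ b, 1 ≤ k := by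
  intro k hk
  rcases List.mem_append.1 hk with h | h
  · rw [List.eq_of_mem_replicate h]
  · exact hb.1 k h

lemma good_nil : Good [] := by simp [Good]

lemma good_cons {k : ℕ} {b : List ℕ} (hk : 2 ≤ k) (hb : ∀ k ∈ b, 1 ≤ k) : Good (k :: b) := by
  refine ⟨?_, ?_⟩
  · intro j hj
    rcases List.mem_cons.1 hj with h | h
    · omega
    · exact hb j h
  · simp; omega

lemma Y_mul_mem {m : ℕ} {v : H} (hv : v ∈ G m) : z 1 * v ∈ G (m + 1) := by
  have : G m ≤ (G (m + 1)).comap (LinearMap.mulLeft ℚ (z 1)) := by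
    apply Submodule.span_le.2
    rintro v ⟨i, b, hi, hb, rfl⟩
    change z 1 * _ ∈ G (m + 1)
    rw [← zl_cons]
    exact zl_mem (i := i + 1) (by omega) hb
  exact this hv

lemma Y_pow_mul_mem {m n : ℕ} {v : H} (hv : v ∈ G m) : Y ^ n * v ∈ G (m + n) := by
  induction n with
  | zero => simpa using hv
  | succ n ih => rw [pow_succ', mul_assoc]; exact Y_mul_mem ih

lemma z_mul_mem {m k : ℕ} (hk : 2 ≤ k) {v : H} (hv : v ∈ G m) : z k * v ∈ G 1 := by
  have : G m ≤ (G 1).comap (LinearMap.mulLeft ℚ (z k)) := by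
    apply Submodule.span_le.2
    rintro v ⟨i, b, hi, hb, rfl⟩
    change z k * _ ∈ G 1
    rw [← zl_cons]
    exact zl_mem (i := 0) (by omega) (good_cons hk (good_pos hb))
  exact this hv

lemma exists_rep (a : List ℕ) (ha : ∀ k ∈ a, 1 ≤ k) :
    ∃ i b, Good b ∧ a = List.replicate i 1 ++ b := by
  induction a with
  | nil => exact ⟨0, [], good_nil, rfl⟩
  | cons k a ih =>
    have h1 : 1 ≤ k := ha k (by simp)
    have h2 : ∀ k ∈ a, 1 ≤ k := fun j hj => ha j (by simp [hj])
    rcases h1.eq_or_lt with h | h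
    · obtain ⟨i, b, hb, rfl⟩ := ih h2
      exact ⟨i + 1, b, hb, by rw [← h]; rfl⟩
    · exact ⟨0, k :: a, good_cons h h2, rfl⟩

lemma zl_mem_some (a : List ℕ) (ha : ∀ k ∈ a, 1 ≤ k) : ∃ m, zl a ∈ G m := by
  obtain ⟨i, b, hb, rfl⟩ := exists_rep a ha
  exact ⟨i + 1, zl_mem (by omega) hb⟩

lemma z_mul_mem_some {k : ℕ} (hk : 1 ≤ k) {v : H} (hv : ∃ m, v ∈ G m) : ∃ m, z k * v ∈ G m := by
  obtain ⟨m, hm⟩ := hv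
  rcases hk.eq_or_lt with h | h
  · subst h; exact ⟨_, Y_mul_mem hm⟩
  · exact ⟨_, z_mul_mem h hm⟩

lemma nharmW_nil_left (b : List ℕ) : nharmW [] b = zl b := by
  rw [nharmW]; rfl

lemma nharmW_nil_right (b : List ℕ) : nharmW b [] = zl b := by
  cases b <;> rw [nharmW] <;> rfl

lemma nharmW_cons (k l : ℕ) (a b : List ℕ) : nharmW (k :: a) (l :: b) =
    z k * nharmW a (l :: b) + z l * nharmW (k :: a) b - z (k + l) * nharmW a b := by
  rw [nharmW]

lemma nharmW_mem_some : ∀ (a b : List ℕ) (_ : ∀ k ∈ a, 1 ≤ k) (_ : ∀ k ∈ b, 1 ≤ k),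
    ∃ m, nharmW a b ∈ G m
  | [], b, _, hb => by rw [nharmW_nil_left]; exact zl_mem_some b hb
  | k :: a, [], ha, _ => by rw [nharmW_nil_right]; exact zl_mem_some _ ha
  | k :: a, l :: b, ha, hb => by
    have hk : 1 ≤ k := ha k (by simp)
    have hl : 1 ≤ l := hb l (by simp)
    have ha' : ∀ k ∈ a, 1 ≤ k := fun j hj => ha j (by simp [hj])
    have hb' : ∀ k ∈ b, 1 ≤ k := fun j hj => hb j (by simp [hj])
    obtain ⟨m1, h1⟩ := z_mul_mem_some hk (nharmW_mem_some a (l :: b) ha' hb)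
    obtain ⟨m2, h2⟩ := z_mul_mem_some hl (nharmW_mem_some (k :: a) b ha hb')
    obtain ⟨m3, h3⟩ := z_mul_mem_some (show 1 ≤ k + l by omega) (nharmW_mem_some a b ha' hb')
    refine ⟨m1 + m2 + m3, ?_⟩
    rw [nharmW]
    exact sub_mem (add_mem (G_mono (by omega) h1) (G_mono (by omega) h2)) (G_mono (by omega) h3)
termination_by a b => a.length + b.length

lemma z_nharmW_mem {k : ℕ} (hk : 2 ≤ k) {a b : List ℕ} (ha : ∀ k ∈ a, 1 ≤ k)
    (hb : ∀ k ∈ b, 1 ≤ k) : z k * nharmW a b ∈ G 1 := by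
  obtain ⟨m, hm⟩ := nharmW_mem_some a b ha hb
  exact z_mul_mem hk hm

lemma good_head {k : ℕ} {a : List ℕ} (h : Good (k :: a)) : 2 ≤ k ∧ ∀ k ∈ a, 1 ≤ k := by
  refine ⟨?_, fun j hj => h.1 j (by simp [hj])⟩
  have h1 := h.1 k (by simp)
  have h2 := h.2
  simp at h2
  omega

lemma nharmW_mem (a b : List ℕ) (ha : Good a) (hb : Good b) (j : ℕ) :
    nharmW a (List.replicate j 1 ++ b) ∈ G (j + 1) := by
  rcases a with _ | ⟨k, a⟩
  · rw [nharmW_nil_left]; exact zl_mem (by omega) hb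
  obtain ⟨hk, ha'⟩ := good_head ha
  induction j with
  | zero =>
    rcases b with _ | ⟨l, b⟩
    · simp only [List.replicate_zero, List.nil_append]
      rw [nharmW_nil_right]; exact zl_mem (i := 0) (by omega) ha
    · obtain ⟨hl, hb'⟩ := good_head hb
      simp only [List.replicate_zero, List.nil_append]
      rw [nharmW]
      exact sub_mem (add_mem (z_nharmW_mem hk ha' hb.1) (z_nharmW_mem hl ha.1 hb'))
        (z_nharmW_mem (by omega) ha' hb')
  | succ j ih =>
    rw [List.replicate_succ, List.cons_append, nharmW]
    have hp := good_pos (i := j) hb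
    refine sub_mem (add_mem (G_mono (by omega) (z_nharmW_mem hk ha' ?_)) (Y_mul_mem ih))
        (G_mono (by omega) (z_nharmW_mem (by omega) ha' hp))
    exact good_pos (i := j + 1) hb

lemma nharmW_lead (a : List ℕ) (ha : Good a) (j : ℕ) :
    nharmW a (List.replicate j 1) - Y ^ j * zl a ∈ G j := by
  rcases a with _ | ⟨k, a⟩
  · rw [nharmW_nil_left, ← zl_rep]; simp
  obtain ⟨hk, ha'⟩ := good_head ha
  induction j with
  | zero => simp [nharmW_nil_right]
  | succ j ih =>
    have hp : ∀ i, ∀ k ∈ List.replicate i 1, 1 ≤ k := fun i k hk => by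
      rw [List.eq_of_mem_replicate hk]
    have e : nharmW (k :: a) (List.replicate (j + 1) 1) - Y ^ (j + 1) * zl (k :: a) =
        z k * nharmW a (List.replicate (j + 1) 1) - z (k + 1) * nharmW a (List.replicate j 1)
        + z 1 * (nharmW (k :: a) (List.replicate j 1) - Y ^ j * zl (k :: a)) := by
      rw [List.replicate_succ, nharmW, pow_succ', mul_sub, ← Y_eq, mul_assoc]
      abel
    rw [e]
    exact add_mem (sub_mem (G_mono (by omega) (z_nharmW_mem hk ha' (hp _)))
      (G_mono (by omega) (z_nharmW_mem (by omega) ha' (hp _)))) (Y_mul_mem ih)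

lemma nharmW_one_mem (b : List ℕ) (hb : Good b) (j : ℕ) :
    nharmW [1] (List.replicate j 1 ++ b) ∈ G (j + 2) := by
  induction j with
  | zero =>
    rcases b with _ | ⟨l, b⟩
    · simp only [List.replicate_zero, List.nil_append]
      rw [nharmW_nil_right]; exact zl_mem (i := 1) (by omega) good_nil
    · obtain ⟨hl, hb'⟩ := good_head hb
      simp only [List.replicate_zero, List.nil_append]
      rw [nharmW]
      refine sub_mem (add_mem ?_ (G_mono (by omega) (z_nharmW_mem hl (by simp) hb')))
        (G_mono (by omega) (z_nharmW_mem (by omega) (by simp) hb'))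
      rw [nharmW_nil_left]
      exact Y_mul_mem (zl_mem (i := 0) (by omega) hb)
  | succ j ih =>
    rw [List.replicate_succ, List.cons_append, nharmW]
    have hp := good_pos (i := j) hb
    refine sub_mem (add_mem ?_ (Y_mul_mem ih))
        (G_mono (by omega) (z_nharmW_mem (by omega) (by simp) hp))
    rw [nharmW_nil_left]
    exact Y_mul_mem (zl_mem (i := j + 1) (by omega) hb)

lemma nharmW_one_lead (j : ℕ) :
    nharmW [1] (List.replicate j 1) - ((j + 1 : ℕ) : ℚ) • Y ^ (j + 1) ∈ G (j + 1) := by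
  induction j with
  | zero => simp [nharmW_nil_right, zl_cons, zl_nil, Y_eq]
  | succ j ih =>
    have hp : ∀ i, ∀ k ∈ List.replicate i 1, 1 ≤ k := fun i k hk => by
      rw [List.eq_of_mem_replicate hk]
    have hz : ∀ i, zl (List.replicate i 1) = Y ^ i := fun i => by
      simpa [zl_nil] using zl_rep i []
    have e : nharmW [1] (List.replicate (j + 1) 1) - ((j + 1 + 1 : ℕ) : ℚ) • Y ^ (j + 1 + 1) =
        z 1 * (nharmW [1] (List.replicate j 1) - ((j + 1 : ℕ) : ℚ) • Y ^ (j + 1))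
        - z (1 + 1) * nharmW [] (List.replicate j 1) := by
      rw [List.replicate_succ, nharmW_cons, ← List.replicate_succ, nharmW_nil_left, nharmW_nil_left, hz, hz,
        pow_succ' Y (j + 1), mul_sub, ← Y_eq, mul_smul_comm, Nat.cast_succ (j + 1), add_smul, one_smul]
      abel
    rw [e]
    exact sub_mem (Y_mul_mem ih) (G_mono (by omega) (z_nharmW_mem (by omega) (by simp) (hp _)))

lemma nharm_Y_mem {m : ℕ} {v : H} (hv : v ∈ G m) : B Y v ∈ G (m + 1) := by
  have : G m ≤ (G (m + 1)).comap (B Y) := by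
    apply Submodule.span_le.2
    rintro v ⟨i, b, hi, hb, rfl⟩
    change B Y _ ∈ G (m + 1)
    have : Y = zl [1] := by rw [zl_cons, zl_nil, mul_one, Y_eq]
    rw [this, B_zl _ _ (by simp) (good_pos hb)]
    exact G_mono (by omega) (nharmW_one_mem b hb i)
  exact this hv

lemma zl_rep' (i : ℕ) : zl (List.replicate i 1) = Y ^ i := by
  simpa [zl_nil] using zl_rep i []

lemma pow_lead (m : ℕ) : nharmPow m Y - (m.factorial : ℚ) • Y ^ m ∈ G m := by
  induction m with
  | zero => simp [nharmPow]
  | succ m ih =>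
    have h1 := nharm_Y_mem ih
    have h2 := nharmW_one_lead m
    have hY : Y = zl [1] := by rw [zl_cons, zl_nil, mul_one, Y_eq]
    have hB : B Y (Y ^ m) = nharmW [1] (List.replicate m 1) := by
      rw [← zl_rep', hY, B_zl _ _ (by simp)]
      intro k hk
      rw [List.eq_of_mem_replicate hk]
    rw [← hB] at h2
    have h3 := add_mem h1 (Submodule.smul_mem _ (m.factorial : ℚ) h2)
    convert h3 using 1
    rw [map_sub, map_smul, smul_sub, smul_smul, nharmPow, B_apply, Nat.factorial_succ]
    push_cast
    rw [mul_comm]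
    abel

lemma B_mem {m : ℕ} {c v : H} (hc : c ∈ G 1) (hv : v ∈ G m) : B c v ∈ G m := by
  have : G 1 ≤ (G m).comap (B.flip v) := by
    apply Submodule.span_le.2
    rintro c ⟨i, a, hi, ha, rfl⟩
    obtain rfl : i = 0 := by omega
    rw [SetLike.mem_coe, Submodule.mem_comap, LinearMap.flip_apply, List.replicate_zero,
      List.nil_append]
    have : G m ≤ (G m).comap (B (zl a)) := by
      apply Submodule.span_le.2
      rintro v ⟨i, b, hi, hb, rfl⟩
      change B _ _ ∈ G m
      rw [B_zl _ _ ha.1 (good_pos hb)]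
      exact G_mono (by omega) (nharmW_mem a b ha hb i)
    exact this hv
  exact this hc

lemma B_pow_lead {c : H} (hc : c ∈ G 1) (m : ℕ) :
    B c (Y ^ m) - Y ^ m * c ∈ G m := by
  have : G 1 ≤ (G m).comap (B.flip (Y ^ m) - LinearMap.mulLeft ℚ (Y ^ m)) := by
    apply Submodule.span_le.2
    rintro c ⟨i, a, hi, ha, rfl⟩
    obtain rfl : i = 0 := by omega
    rw [SetLike.mem_coe, Submodule.mem_comap, LinearMap.sub_apply, LinearMap.flip_apply,
      LinearMap.mulLeft_apply, List.replicate_zero, List.nil_append]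
    rw [← zl_rep', B_zl _ _ ha.1, zl_rep']
    · exact nharmW_lead a ha m
    · intro k hk
      rw [List.eq_of_mem_replicate hk]
  exact this hc

lemma lead {c : H} (hc : c ∈ G 1) (m : ℕ) :
    B c (nharmPow m Y) - (m.factorial : ℚ) • (Y ^ m * c) ∈ G m := by
  have h1 := B_mem hc (pow_lead m)
  have h2 := Submodule.smul_mem _ (m.factorial : ℚ) (B_pow_lead hc m)
  convert add_mem h1 h2 using 1
  rw [map_sub, map_smul, smul_sub]
  abel

lemma exists_parse (l : List Letter) (n : ℕ) : ∃ k b, n + 1 ≤ k ∧ (∀ k ∈ b, 1 ≤ k) ∧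
    List.replicate n Letter.x ++ (l ++ [Letter.y]) = FreeMonoid.toList (zListW (k :: b)) := by
  induction l generalizing n with
  | nil =>
    refine ⟨n + 1, [], le_rfl, by simp, ?_⟩
    simp [zListW]
  | cons a l ih =>
    cases a with
    | x =>
      obtain ⟨k, b, hk, hb, h⟩ := ih (n + 1)
      refine ⟨k, b, by omega, hb, ?_⟩
      rw [← h, List.replicate_succ']
      simp
    | y =>
      obtain ⟨k, b, hk, hb, h⟩ := ih 0
      refine ⟨n + 1, k :: b, le_rfl, ?_, ?_⟩
      · intro j hj
        rcases List.mem_cons.1 hj with h | h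
        · omega
        · exact hb j h
      · simpa [zListW] using h

lemma H0_le : H0 ≤ G 1 := by
  have h1 : (1 : H) ∈ G 1 := by
    simpa [zl_nil] using zl_mem (m := 1) (i := 0) (by omega) good_nil
  apply sup_le
  · rintro _ ⟨h, rfl⟩
    change X * h * Y ∈ G 1
    induction h using MonoidAlgebra.induction_linear with
    | zero => simp
    | add f g hf hg => rw [mul_add, add_mul]; exact add_mem hf hg
    | single u r =>
      have : (MonoidAlgebra.single u r : H) = r • word u := by simp [word]
      rw [this, mul_smul_comm, smul_mul_assoc]
      apply Submodule.smul_mem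
      obtain ⟨k, b, hk, hb, h⟩ := exists_parse (FreeMonoid.toList u) 1
      have : X * word u * Y = zl (List.replicate 0 1 ++ (k :: b)) := by
        rw [X, Y, word_mul, word_mul, zl]
        congr 1
      rw [this]
      exact zl_mem (by omega) (good_cons hk hb)
  · rw [Submodule.span_singleton_le_iff_mem]; exact h1

lemma zl_cons_end (k : ℕ) (b : List ℕ) : ∃ u, zl (k :: b) = word u * Y := by
  induction b generalizing k with
  | nil =>
    refine ⟨FreeMonoid.ofList (List.replicate (k - 1) Letter.x), ?_⟩
    rw [zl_cons, zl_nil, mul_one, Y, word_mul]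
    rfl
  | cons l b ih =>
    obtain ⟨u, hu⟩ := ih l
    refine ⟨zW k * u, ?_⟩
    rw [zl_cons, hu, z, ← mul_assoc, word_mul]

lemma z_succ (k : ℕ) (hk : 2 ≤ k) : z k = X * z (k - 1) := by
  obtain ⟨k, rfl⟩ := Nat.exists_eq_add_of_le' hk
  rw [z, X, z, word_mul]
  rfl

lemma le_H0 : G 1 ≤ H0 := by
  apply Submodule.span_le.2
  rintro c ⟨i, a, hi, ha, rfl⟩
  obtain rfl : i = 0 := by omega
  rcases a with _ | ⟨k, a⟩
  · exact Submodule.mem_sup_right (Submodule.mem_span_singleton_self _)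
  · obtain ⟨hk, ha'⟩ := good_head ha
    obtain ⟨u, hu⟩ := zl_cons_end (k - 1) a
    apply Submodule.mem_sup_left
    refine ⟨word u, ?_⟩
    change X * word u * Y = zl (k :: a)
    rw [mul_assoc, ← hu, zl_cons, zl_cons, z_succ k hk, mul_assoc]

lemma Ypow_word (m : ℕ) (u : FreeMonoid Letter) :
    Y ^ m * word u = word (FreeMonoid.ofList (List.replicate m Letter.y) * u) := by
  induction m with
  | zero => simp
  | succ m ih =>
    rw [pow_succ', mul_assoc, ih, Y, word_mul]
    rfl

lemma not_prefix (i m : ℕ) (h : i < m) (L u : List Letter) (hL : L.head? ≠ some Letter.y) :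
    List.replicate i Letter.y ++ L ≠ List.replicate m Letter.y ++ u := by
  induction i generalizing m with
  | zero =>
    obtain ⟨m, rfl⟩ := Nat.exists_eq_add_of_lt h
    intro e
    simp [List.replicate_succ] at e
    simp [e] at hL
  | succ i ih =>
    obtain ⟨m, rfl⟩ : ∃ n, m = n + 1 := ⟨m - 1, by omega⟩
    intro e
    simp only [List.replicate_succ, List.cons_append, List.cons.injEq, true_and] at e
    exact ih m (by omega) e

lemma coeff_zero_of_mem {m : ℕ} {v : H} (hv : v ∈ G m) (u : FreeMonoid Letter) :
    v.coeff (FreeMonoid.ofList (List.replicate m Letter.y) * u) = 0 := by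
  induction hv using Submodule.span_induction with
  | zero => simp
  | add f g _ _ hf hg => simp [hf, hg]
  | smul r f _ hf => simp [hf]
  | mem v hv =>
    obtain ⟨i, b, hi, hb, rfl⟩ := hv
    rw [zl_rep, zl, Ypow_word, word, MonoidAlgebra.coeff_single]
    apply Finsupp.single_eq_of_ne'
    intro e
    refine not_prefix i m hi (FreeMonoid.toList (zListW b)) (FreeMonoid.toList u) ?_ (congrArg FreeMonoid.toList e)
    rcases b with _ | ⟨k, b⟩
    · simp [zListW]
    · obtain ⟨hk, -⟩ := good_head hb
      obtain ⟨k, rfl⟩ := Nat.exists_eq_add_of_le' hk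
      simp [zListW, List.replicate_succ]

lemma coeff_Ypow (m : ℕ) (c : H) (u : FreeMonoid Letter) :
    (Y ^ m * c).coeff (FreeMonoid.ofList (List.replicate m Letter.y) * u) = c.coeff u := by
  induction c using MonoidAlgebra.induction_linear with
  | zero => simp
  | add f g hf hg => simp [mul_add, hf, hg]
  | single t r =>
    have : (MonoidAlgebra.single t r : H) = r • word t := by simp [word]
    rw [this, mul_smul_comm, Ypow_word]
    classical
    simp [word, MonoidAlgebra.coeff_single, Finsupp.single_apply]

lemma eq_zero_of_Ypow {m : ℕ} {c : H} (h : Y ^ m * c ∈ G m) : c = 0 := by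
  apply MonoidAlgebra.coeff_injective
  ext u
  rw [← coeff_Ypow m, coeff_zero_of_mem h]
  simp

lemma B_pow_mem {c : H} (hc : c ∈ G 1) (m : ℕ) : B c (nharmPow m Y) ∈ G (m + 1) := by
  have h := add_mem (G_mono (Nat.le_succ m) (lead hc m))
    (Submodule.smul_mem _ (m.factorial : ℚ) (G_mono (by omega) (Y_pow_mul_mem (n := m) hc)))
  rwa [sub_add_cancel] at h

lemma exists_repr (m : ℕ) (v : H) (hv : v ∈ G m) :
    ∃ c : ℕ → H, (∀ i, c i ∈ G 1) ∧ v = ∑ i ∈ Finset.range m, B (c i) (nharmPow i Y) := by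
  induction m generalizing v with
  | zero =>
    have : v = 0 := eq_zero_of_Ypow (m := 0) (by simpa using hv)
    exact ⟨0, fun i => zero_mem _, by simp [this]⟩
  | succ m ihm =>
    induction hv using Submodule.span_induction with
    | zero => exact ⟨0, fun i => zero_mem _, by simp⟩
    | add f g _ _ hf hg =>
      obtain ⟨c, hc, e⟩ := hf
      obtain ⟨d, hd, e'⟩ := hg
      refine ⟨c + d, fun i => add_mem (hc i) (hd i), ?_⟩
      simp [e, e', Finset.sum_add_distrib]
    | smul r f _ hf =>
      obtain ⟨c, hc, e⟩ := hf
      refine ⟨r • c, fun i => Submodule.smul_mem _ _ (hc i), ?_⟩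
      simp [e, Finset.smul_sum]
    | mem v hv =>
      obtain ⟨i, b, hi, hb, rfl⟩ := hv
      -- the top coefficient (zero when `i < m`)
      have key : ∃ t ∈ G 1, zl (List.replicate i 1 ++ b) - B t (nharmPow m Y) ∈ G m := by
        rcases Nat.lt_or_ge i m with h | h
        · exact ⟨0, zero_mem _, by simpa using zl_mem h hb⟩
        · obtain rfl : i = m := by omega
          have hb1 : zl b ∈ G 1 := by simpa using zl_mem (m := 1) (i := 0) (by omega) hb
          have hne : (i.factorial : ℚ) ≠ 0 := by exact_mod_cast i.factorial_ne_zero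
          refine ⟨(i.factorial : ℚ)⁻¹ • zl b, Submodule.smul_mem _ _ hb1, ?_⟩
          have h := Submodule.smul_mem _ (-(i.factorial : ℚ)⁻¹) (lead hb1 i)
          rw [smul_sub, smul_smul, neg_mul, inv_mul_cancel₀ hne, neg_smul, neg_smul, one_smul,
            sub_neg_eq_add, ← zl_rep] at h
          rw [map_smul, LinearMap.smul_apply]
          convert h using 1
          abel
      obtain ⟨t, ht, h⟩ := key
      obtain ⟨c, hc, e⟩ := ihm _ h
      refine ⟨Function.update c m t, ?_, ?_⟩
      · intro j
        by_cases hj : j = m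
        · subst hj; simpa using ht
        · simpa [hj] using hc j
      · rw [Finset.sum_range_succ, Function.update_self]
        rw [sub_eq_iff_eq_add] at e
        rw [e]
        congr 1
        apply Finset.sum_congr rfl
        intro j hj
        rw [Function.update_of_ne (by have := Finset.mem_range.1 hj; omega)]

lemma repr_unique (m : ℕ) (c : ℕ → H) (hc : ∀ i < m, c i ∈ G 1)
    (h : ∑ i ∈ Finset.range m, B (c i) (nharmPow i Y) = 0) : ∀ i < m, c i = 0 := by
  induction m with
  | zero => intro i hi; omega
  | succ m ih =>
    have hm : c m = 0 := by
      rw [Finset.sum_range_succ] at h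
      have h1 : ∑ i ∈ Finset.range m, B (c i) (nharmPow i Y) ∈ G m := by
        apply Submodule.sum_mem
        intro i hi
        have := Finset.mem_range.1 hi
        exact G_mono this (B_pow_mem (hc i (by omega)) i)
      have h2 : B (c m) (nharmPow m Y) ∈ G m := by
        rw [eq_neg_of_add_eq_zero_right h]
        exact neg_mem h1
      have h3 := sub_mem h2 (lead (hc m (by omega)) m)
      rw [sub_sub_cancel] at h3
      have hne : (m.factorial : ℚ) ≠ 0 := by exact_mod_cast m.factorial_ne_zero
      exact eq_zero_of_Ypow ((Submodule.smul_mem_iff _ hne).1 h3)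
    rw [Finset.sum_range_succ, hm, map_zero, LinearMap.zero_apply, add_zero] at h
    intro i hi
    rcases Nat.lt_succ_iff_lt_or_eq.1 hi with h' | rfl
    · exact ih (fun i hi => hc i (by omega)) h i h'
    · exact hm

end H

open H

/-- Every element `yᵐ w` of `H¹` (`m ≥ 0`, `w` a word of `H⁰`) has a unique
representation `yᵐ w = w₀ + w₁ *̄ y + ⋯ + wₘ *̄ y^{*̄ m}` with all `wᵢ ∈ H⁰`;
consequently `(H¹, *̄) ≃ (H⁰, *̄)[y]`. -/
theorem nharm_polynomial_representation (m : ℕ) (w : FreeMonoid Letter)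
    (hw : word w ∈ H0) :
    ∃! c : Fin (m + 1) → H,
      (∀ i, c i ∈ H0) ∧
      word (FreeMonoid.ofList (List.replicate m Letter.y) * w) =
        ∑ i : Fin (m + 1), nharm (c i) (nharmPow i.1 Y) := by
  have hmem : word (FreeMonoid.ofList (List.replicate m Letter.y) * w) ∈ G (m + 1) := by
    rw [← Ypow_word]
    exact G_mono (by omega) (Y_pow_mul_mem (n := m) (H0_le hw))
  obtain ⟨c, hc, e⟩ := exists_repr (m + 1) _ hmem
  refine ⟨fun i => c i, ⟨fun i => le_H0 (hc i), ?_⟩, ?_⟩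
  · rw [e]
    exact (Fin.sum_univ_eq_sum_range (fun i => B (c i) (nharmPow i Y)) (m + 1)).symm
  · rintro d ⟨hd, e'⟩
    let d' : ℕ → H := fun i => if h : i < m + 1 then d ⟨i, h⟩ else 0
    have hd' : ∀ i : Fin (m + 1), d' i = d i := fun i => dif_pos i.2
    have e2 : word (FreeMonoid.ofList (List.replicate m Letter.y) * w) =
        ∑ i ∈ Finset.range (m + 1), B (d' i) (nharmPow i Y) := by
      rw [e', ← Fin.sum_univ_eq_sum_range (fun i => B (d' i) (nharmPow i Y)) (m + 1)]
      apply Finset.sum_congr rfl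
      intro i _
      rw [hd', B_apply]
    have hu := repr_unique (m + 1) (fun i => d' i - c i)
      (fun i hi => sub_mem (by rw [hd' ⟨i, hi⟩]; exact H0_le (hd _)) (hc i))
      (by
        simp only [map_sub, LinearMap.sub_apply, Finset.sum_sub_distrib]
        rw [← e2, ← e, sub_self])
    funext i
    rw [← hd']
    exact sub_eq_zero.1 (hu i i.2)
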